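/- Let (W, ρ_W) be an irreducible complex representation of S_N and suppose k ≠ 0. If ρ_W extends to a representation ρ of H_{1,k,c}(Γ_N) on the space W (i.e., a representation whose restriction to S_N ⊂ Γ_N equals ρ_W), then there is a character χ: Γ → ℂ^× such that ρ(γ_i) = χ(γ)·Id_W for all γ ∈ Γ and all i, ρ(x_i) = ρ(y_i) = 0 for all i, and ρ_W(s_{12} + s_{13} + ⋯ + s_{1N}) = −(2/(k·|Γ|))·(1 + Σ_{γ∈Γ∖{1}} c_γ χ(γ)) · Id_W; in particular the sum of transpositions s_{12} + ⋯ + s_{1N} acts on W by a scalar. -/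

import Mathlib

noncomputable section

/-- `SL(2,ℂ)`. -/
abbrev SL2 : Type := Matrix.SpecialLinearGroup (Fin 2) ℂ

/-- The permutation action of `S_N` on `Γ^N`, `(σ • f) i = f (σ⁻¹ i)`. -/
def wphi (Γ : Type) [Group Γ] (N : ℕ) : Equiv.Perm (Fin N) →* MulAut (Fin N → Γ) where
  toFun σ := MulEquiv.arrowCongr σ (MulEquiv.refl Γ)
  map_one' := rfl
  map_mul' _ _ := rfl

/-- The wreath product `Γ_N = S_N ⋉ Γ^N`. -/
abbrev WP (Γ : Type) [Group Γ] (N : ℕ) : Type :=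
  (Fin N → Γ) ⋊[wphi Γ N] Equiv.Perm (Fin N)

/-- `γ_i`: the element `γ ∈ Γ` placed in the `i`-th factor of `Γ^N ⊂ Γ_N`. -/
def tG {Γ : Type} [Group Γ] {N : ℕ} (i : Fin N) (γ : Γ) : WP Γ N :=
  SemidirectProduct.inl (Pi.mulSingle i γ)

/-- The symplectic reflection `s_{ij} γ_i γ_j⁻¹` of type (S). -/
def tS {Γ : Type} [Group Γ] {N : ℕ} (i j : Fin N) (γ : Γ) : WP Γ N :=
  SemidirectProduct.inr (Equiv.swap i j) * tG i γ * (tG j γ)⁻¹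

/-- The linear action of the wreath product `Γ_N` (for `Γ ⊂ SL(2,ℂ)`) on `V = L^{⊕N}`,
`(g · v) i = g.left i • v (g.right⁻¹ i)`. -/
def actL (Γ : Subgroup SL2) (N : ℕ) (g : WP Γ N) :
    (Fin N → Fin 2 → ℂ) →ₗ[ℂ] Fin N → Fin 2 → ℂ :=
  LinearMap.pi fun i =>
    (Matrix.mulVecLin ((g.left i : SL2) : Matrix (Fin 2) (Fin 2) ℂ)).comp
      (LinearMap.proj (g.right⁻¹ i))

noncomputable section

variable (Γ : Subgroup SL2) [Fintype Γ] [DecidableEq Γ] (N : ℕ)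

/-- Generator `g ∈ Γ_N` in the free algebra on `Γ_N ⊕ {x_i, y_i}`. -/
def nG (g : WP Γ N) : FreeAlgebra ℂ (WP Γ N ⊕ Fin N × Fin 2) :=
  FreeAlgebra.ι ℂ (Sum.inl g)

/-- Generator `x_i` (for `p = 0`) resp. `y_i` (for `p = 1`) in the free algebra. -/
def nX (i : Fin N) (p : Fin 2) : FreeAlgebra ℂ (WP Γ N ⊕ Fin N × Fin 2) :=
  FreeAlgebra.ι ℂ (Sum.inr (i, p))

/-- The general vector `v ∈ V = L^{⊕N}` inside the free algebra. -/
def nV (v : Fin N → Fin 2 → ℂ) : FreeAlgebra ℂ (WP Γ N ⊕ Fin N × Fin 2) :=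
  ∑ i : Fin N, ∑ p : Fin 2, v i p • nX Γ N i p

/-- The standard symplectic form `ω_L` on `L = ℂ²`: `ω_L(u,v) = u₀ v₁ - u₁ v₀`. -/
def omL (u v : Fin 2 → ℂ) : ℂ := u 0 * v 1 - u 1 * v 0

/-- The defining relations of the wreath product symplectic reflection algebra
`H_{1,k,c}(Γ_N)`:  the group relations of `Γ_N`, the relations `g v g⁻¹ = g(v)` for
`v ∈ V`, and the relations (R1), (R2) of Gan–Ginzburg. -/
inductive HRel (k : ℂ) (c : Γ → ℂ) :
    FreeAlgebra ℂ (WP Γ N ⊕ Fin N × Fin 2) → FreeAlgebra ℂ (WP Γ N ⊕ Fin N × Fin 2) → Prop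
  | grp_mul (g h : WP Γ N) : HRel k c (nG Γ N g * nG Γ N h) (nG Γ N (g * h))
  | grp_one : HRel k c (nG Γ N 1) 1
  | grp_conj (g : WP Γ N) (v : Fin N → Fin 2 → ℂ) :
      HRel k c (nG Γ N g * nV Γ N v * nG Γ N g⁻¹) (nV Γ N (actL Γ N g v))
  | r1 (i : Fin N) :
      HRel k c (nX Γ N i 0 * nX Γ N i 1 - nX Γ N i 1 * nX Γ N i 0)
        (1 + (k / 2) • ∑ j ∈ Finset.univ.filter (fun j : Fin N => j ≠ i),
            ∑ γ : Γ, nG Γ N (tS i j γ)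
          + ∑ γ ∈ Finset.univ.filter (fun γ : Γ => γ ≠ 1), c γ • nG Γ N (tG i γ))
  | r2 (i j : Fin N) (hij : i ≠ j) (u v : Fin 2 → ℂ) :
      HRel k c (nV Γ N (Pi.single i u) * nV Γ N (Pi.single j v)
          - nV Γ N (Pi.single j v) * nV Γ N (Pi.single i u))
        ((-(k / 2)) • ∑ γ : Γ,
          omL (Matrix.mulVec ((γ : SL2) : Matrix (Fin 2) (Fin 2) ℂ) u) v • nG Γ N (tS i j γ))

/-- The wreath product symplectic reflection algebra `H_{1,k,c}(Γ_N)`. -/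
abbrev HN (k : ℂ) (c : Γ → ℂ) : Type := RingQuot (HRel Γ N k c)

/-- The image of the group element `g ∈ Γ_N` in `H_{1,k,c}(Γ_N)`. -/
def hG (k : ℂ) (c : Γ → ℂ) (g : WP Γ N) : HN Γ N k c :=
  RingQuot.mkAlgHom ℂ (HRel Γ N k c) (nG Γ N g)

/-- The image of `x_i` (`p = 0`) resp. `y_i` (`p = 1`) in `H_{1,k,c}(Γ_N)`. -/
def hX (k : ℂ) (c : Γ → ℂ) (i : Fin N) (p : Fin 2) : HN Γ N k c :=
  RingQuot.mkAlgHom ℂ (HRel Γ N k c) (nX Γ N i p)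

end

/-!
Let `ρ` extend the irreducible representation of `S_N` on `W`. By Schur's lemma the class sum of
all transpositions acts on `W` by a scalar. Conjugation by transpositions permutes the commuting
operators `γ_1, …, γ_N`, so the double commutator `⁅γ_j, ⁅γ_i, ·⁆⁆` kills every transposition
except `s_ij`, which it sends to `-(γ_i - γ_j)² s_ij`. Hence `(γ_i - γ_j)² = 0`, and since `γ_i`
and `γ_j` commute and have finite order, `γ_i = γ_j`. This operator commutes with `S_N`, so it is a
scalar `χ(γ)`.

If `Γ ≠ 1`, choose `γ ≠ 1`. As `γ_i` acts by a scalar, the relation `γ_i u_i γ_i⁻¹ = (γ u)_i` shows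
that `ρ` kills `((γ - 1) u)_i`, and `γ - 1` is invertible on `L`; thus `x_i = y_i = 0`. If
`Γ = 1`, then `⁅x_i, y_1 + ⋯ + y_N⁆ = 1`, which is impossible in finite dimension by taking traces.
The formula for the sum of transpositions is then what remains of (R1).
-/

open Equiv Finset

section Nilpotent

variable {A : Type*} [Ring A] {m : ℕ}

theorem eq_one_of_pow_eq_one_of_isNilpotent_sub_one {u : A} (hm : IsUnit (m : A))
    (hu : u ^ m = 1) (hnil : IsNilpotent (u - 1)) : u = 1 := by
  have hgeom_sub : (∑ i ∈ range m, u ^ i) - m = (u - 1) * ∑ i ∈ range m, ∑ j ∈ range i, u ^ j := by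
    rw [mul_sum]
    simp [mul_geom_sum]
  have hgeom_nil : IsNilpotent ((∑ i ∈ range m, u ^ i) - m) := by
    rw [hgeom_sub]
    refine Commute.isNilpotent_mul_right ?_ hnil
    exact .sum_right _ _ _ fun i _ ↦ .sum_right _ _ _ fun j _ ↦
      ((Commute.refl u).sub_left (.one_left u)).pow_right j
  have hgeom : IsUnit (∑ i ∈ range m, u ^ i) := by
    simpa using hgeom_nil.isUnit_add_left_of_commute hm (Nat.cast_commute m _).symm
  have hprod : (∑ i ∈ range m, u ^ i) * (u - 1) = 0 := by rw [geom_sum_mul, hu, sub_self]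
  exact sub_eq_zero.mp (hgeom.mul_right_eq_zero.mp hprod)

theorem eq_of_pow_eq_one_of_isNilpotent_sub {a b : A} (hab : Commute a b) (hm : IsUnit (m : A))
    (ha : a ^ m = 1) (hb : b ^ m = 1) (hnil : IsNilpotent (a - b)) : a = b := by
  cases subsingleton_or_nontrivial A
  · exact Subsingleton.elim a b
  have hm0 : m ≠ 0 := by
    rintro rfl
    simp at hm
  obtain ⟨v, rfl⟩ := IsUnit.of_pow_eq_one hb hm0
  have hav : Commute a ↑v⁻¹ := hab.units_inv_right
  have hpow : (a * ↑v⁻¹) ^ m = 1 := by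
    rw [hav.mul_pow, ha, one_mul, ← Units.val_pow_eq_pow_val, inv_pow,
      Units.ext (by simpa using hb : ((v ^ m : Aˣ) : A) = (1 : Aˣ)), inv_one, Units.val_one]
  have hsub : a * ↑v⁻¹ - 1 = (a - v) * ↑v⁻¹ := by rw [sub_mul, Units.mul_inv]
  have hnil' : IsNilpotent (a * ↑v⁻¹ - 1) := by
    rw [hsub]
    exact (hav.sub_left (Commute.refl (v : A)).units_inv_right).isNilpotent_mul_right hnil
  exact (Units.mul_inv_eq_one).mp (eq_one_of_pow_eq_one_of_isNilpotent_sub_one hm hpow hnil')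

theorem sub_one_sq_eq_zero_of_det_eq_one {K : Type*} [CommRing K] {M : Matrix (Fin 2) (Fin 2) K}
    (hdet : M.det = 1) (hdet_sub : (M - 1).det = 0) : (M - 1) ^ 2 = 0 := by
  rw [Matrix.det_fin_two] at hdet hdet_sub
  simp only [Matrix.sub_apply, Matrix.one_apply_eq, Fin.isValue, ne_eq, zero_ne_one,
    not_false_eq_true, Matrix.one_apply_ne, sub_zero, one_ne_zero] at hdet_sub
  ext p q
  fin_cases p <;> fin_cases q <;> simp [sq, Matrix.mul_apply, Fin.sum_univ_two] <;> grind

theorem isUnit_sub_one_of_pow_eq_one {K : Type*} [Field K] {M : Matrix (Fin 2) (Fin 2) K}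
    (hm : (m : K) ≠ 0) (hdet : M.det = 1) (hpow : M ^ m = 1) (hM : M ≠ 1) : IsUnit (M - 1) := by
  rw [Matrix.isUnit_iff_isUnit_det, isUnit_iff_ne_zero]
  intro hdet_sub
  have hm_unit : IsUnit (m : Matrix (Fin 2) (Fin 2) K) := by
    simpa using (IsUnit.mk0 (m : K) hm).map (algebraMap K (Matrix (Fin 2) (Fin 2) K))
  exact hM <| eq_one_of_pow_eq_one_of_isNilpotent_sub_one hm_unit hpow
    ⟨2, sub_one_sq_eq_zero_of_det_eq_one hdet hdet_sub⟩

end Nilpotent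

section Scalars

theorem exists_character_of_forall_mem_range_algebraMap {G K A : Type*} [Group G] [CommRing K]
    [Ring A] [Algebra K A] [FaithfulSMul K A] (f : G →* A)
    (hf : ∀ g, f g ∈ Set.range (algebraMap K A)) :
    ∃ χ : G →* Kˣ, ∀ g, f g = algebraMap K A (χ g) := by
  choose s hs using hf
  have hinj := FaithfulSMul.algebraMap_injective K A
  let χ : G →* K :=
    { toFun := s
      map_one' := hinj (by rw [hs, map_one, map_one])
      map_mul' := fun g h ↦ hinj (by rw [hs, map_mul, map_mul, hs, hs]) }
  exact ⟨χ.toHomUnits, fun g ↦ (hs g).symm⟩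

variable {G K V : Type*} [Field K] [AddCommGroup V] [Module K V]

theorem mem_range_algebraMap_of_forall_commute [Monoid G] [IsAlgClosed K] [FiniteDimensional K V]
    (ρ : Representation K G V) [ρ.IsIrreducible] {T : Module.End K V}
    (hT : ∀ g, Commute T (ρ g)) : T ∈ Set.range (algebraMap K (Module.End K V)) := by
  let T' : Representation.IntertwiningMap ρ ρ := ⟨T, hT⟩
  obtain ⟨μ, hμ⟩ :=
    (Representation.IsIrreducible.algebraMap_intertwiningMap_bijective_of_isAlgClosed
      (ρ := ρ)).surjective T'
  exact ⟨μ, congrArg Representation.IntertwiningMap.toLinearMap hμ⟩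

theorem nontrivial_of_isIrreducible [Monoid G] (ρ : Representation K G V) [ρ.IsIrreducible] :
    Nontrivial V := by
  by_contra hV
  rw [not_nontrivial_iff_subsingleton] at hV
  exact bot_ne_top (α := Subrepresentation ρ)
    (Subrepresentation.toSubmodule_injective (Subsingleton.elim _ _))

theorem isIrreducible_of_forall_map_le [Monoid G] [Nontrivial V] (ρ : Representation K G V)
    (hρ : ∀ U : Submodule K V, (∀ g, U.map (ρ g) ≤ U) → U = ⊥ ∨ U = ⊤) : ρ.IsIrreducible where
  exists_pair_ne := ⟨⊥, ⊤, fun h ↦ bot_ne_top (congrArg Subrepresentation.toSubmodule h)⟩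
  eq_bot_or_eq_top U :=
    (hρ U.toSubmodule fun g ↦ Submodule.map_le_iff_le_comap.mpr (U.apply_mem_toSubmodule g)).imp
      (fun h ↦ Subrepresentation.toSubmodule_injective h)
      (fun h ↦ Subrepresentation.toSubmodule_injective h)

theorem subsingleton_of_lie_eq_one [CharZero K] [FiniteDimensional K V] {S T : Module.End K V}
    (h : ⁅S, T⁆ = 1) : Subsingleton V := by
  have htrace : LinearMap.trace K V 1 = 0 := by rw [← h, LinearMap.trace_lie]
  rw [LinearMap.trace_one, Nat.cast_eq_zero] at htrace
  exact Module.finrank_zero_iff.mp htrace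

end Scalars

section Transpositions

attribute [local instance] LieRing.ofAssociativeRing

variable {ι A : Type*} [DecidableEq ι] [Ring A]

theorem eq_swap_of_isSwap {τ : Perm ι} (hτ : τ.IsSwap) {i j : ι} (hij : i ≠ j) (hi : τ i ≠ i)
    (hj : τ j ≠ j) : τ = swap i j := by
  obtain ⟨p, q, -, rfl⟩ := hτ
  rw [swap_apply_ne_self_iff] at hi hj
  grind [swap_comm]

open scoped Classical in
/-- The image of the class sum of all transpositions under `f : S_ι → A`. -/
def transpositionSum [Fintype ι] (f : Perm ι →* A) : A :=
  ∑ τ with τ.IsSwap, f τ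

theorem commute_transpositionSum [Fintype ι] (f : Perm ι →* A) (σ : Perm ι) :
    Commute (transpositionSum f) (f σ) := by
  rw [transpositionSum, Commute, SemiconjBy, sum_mul, mul_sum]
  symm
  refine sum_equiv (MulAut.conj σ).toEquiv (fun τ ↦ ?_) fun τ _ ↦ ?_
  · simp [← Perm.card_support_eq_two]
  · simp [← map_mul]

variable {f : Perm ι →* A} {a : ι → A} {i j : ι}

theorem lie_lie_map_swap (hcomm : Commute (a i) (a j))
    (hconj : ∀ σ i, SemiconjBy (f σ) (a i) (a (σ i))) :
    ⁅a j, ⁅a i, f (swap i j)⁆⁆ = -((a i - a j) ^ 2 * f (swap i j)) := by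
  have hi : f (swap i j) * a i = a j * f (swap i j) := by
    simpa [swap_apply_left] using (hconj (swap i j) i).eq
  have hj : f (swap i j) * a j = a i * f (swap i j) := by
    simpa [swap_apply_right] using (hconj (swap i j) j).eq
  have hinner : ⁅a i, f (swap i j)⁆ = (a i - a j) * f (swap i j) := by
    rw [Ring.lie_def, hi, sub_mul]
  have houter : Commute (a j) (a i - a j) := hcomm.symm.sub_right (.refl _)
  calc ⁅a j, ⁅a i, f (swap i j)⁆⁆
      = a j * (a i - a j) * f (swap i j) - (a i - a j) * (f (swap i j) * a j) := by
        rw [hinner, Ring.lie_def, mul_assoc, mul_assoc]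
    _ = -((a i - a j) ^ 2 * f (swap i j)) := by
        rw [hj, houter.eq]
        noncomm_ring

theorem lie_lie_map_eq_zero_of_isSwap (hcomm : Commute (a i) (a j)) (hij : i ≠ j)
    (hconj : ∀ σ i, SemiconjBy (f σ) (a i) (a (σ i))) {τ : Perm ι} (hτ : τ.IsSwap)
    (hne : τ ≠ swap i j) : ⁅a j, ⁅a i, f τ⁆⁆ = 0 := by
  have commute_of_fixed {l : ι} (hl : τ l = l) : Commute (a l) (f τ) := by
    have h := (hconj τ l).symm
    rwa [hl] at h
  by_cases hi : τ i = i
  · rw [(commute_of_fixed hi).lie_eq, lie_zero]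
  · have hj : τ j = j := by
      by_contra hj
      exact hne (eq_swap_of_isSwap hτ hij hi hj)
    have hjτ := commute_of_fixed hj
    exact ((hcomm.symm.mul_right hjτ).sub_right (hjτ.mul_right hcomm.symm)).lie_eq

theorem sub_sq_eq_zero_of_commute_transpositionSum [Fintype ι] (hcomm : Commute (a i) (a j))
    (hij : i ≠ j) (hconj : ∀ σ i, SemiconjBy (f σ) (a i) (a (σ i)))
    (hsum : Commute (a i) (transpositionSum f)) : (a i - a j) ^ 2 = 0 := by
  classical
  have hlie : ⁅a j, ⁅a i, transpositionSum f⁆⁆ = ⁅a j, ⁅a i, f (swap i j)⁆⁆ := by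
    rw [transpositionSum, lie_sum, lie_sum]
    refine sum_eq_single_of_mem _ (by simpa using ⟨i, j, hij, rfl⟩) fun τ hτ hne ↦ ?_
    exact lie_lie_map_eq_zero_of_isSwap hcomm hij hconj (mem_filter.mp hτ).2 hne
  have hprod : (a i - a j) ^ 2 * f (swap i j) = 0 := by
    rw [← neg_eq_zero, ← lie_lie_map_swap hcomm hconj, ← hlie, hsum.lie_eq, lie_zero]
  exact ((Group.isUnit (swap i j)).map f).mul_left_eq_zero.mp hprod

theorem eq_of_commute_transpositionSum [Fintype ι] (hcomm : ∀ i j, Commute (a i) (a j))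
    (hconj : ∀ σ i, SemiconjBy (f σ) (a i) (a (σ i)))
    (hsum : Commute (a i) (transpositionSum f)) {m : ℕ} (hm : IsUnit (m : A))
    (hpow : ∀ i, a i ^ m = 1) : a i = a j := by
  obtain rfl | hij := eq_or_ne i j
  · rfl
  · exact eq_of_pow_eq_one_of_isNilpotent_sub (hcomm i j) hm (hpow i) (hpow j)
      ⟨2, sub_sq_eq_zero_of_commute_transpositionSum (hcomm i j) hij hconj hsum⟩

end Transpositions

section WreathProduct

variable {Γ : Type} [Group Γ] {N : ℕ}

/-- The inclusion `γ ↦ γ_i` of `Γ` into the wreath product, as a group homomorphism. -/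
def tGHom (i : Fin N) : Γ →* WP Γ N :=
  SemidirectProduct.inl.comp (MonoidHom.mulSingle (fun _ ↦ Γ) i)

theorem tGHom_apply (i : Fin N) (γ : Γ) : tGHom i γ = tG i γ := rfl

theorem commute_tG (i j : Fin N) (γ : Γ) : Commute (tG i γ) (tG j γ) := by
  obtain rfl | hij := eq_or_ne i j
  · exact .refl _
  · exact (Pi.mulSingle_commute (f := fun _ ↦ Γ) hij γ γ).map SemidirectProduct.inl

theorem semiconjBy_inr_tG (σ : Perm (Fin N)) (i : Fin N) (γ : Γ) :
    SemiconjBy (SemidirectProduct.inr σ) (tG i γ) (tG (σ i) γ) := by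
  have hsingle : wphi Γ N σ (Pi.mulSingle i γ) = Pi.mulSingle (σ i) γ := by
    funext l
    change (Pi.mulSingle i γ : Fin N → Γ) (σ.symm l) = (Pi.mulSingle (σ i) γ : Fin N → Γ) l
    simp only [Pi.mulSingle_apply, symm_apply_eq]
  rw [SemiconjBy, tG, tG, ← hsingle, SemidirectProduct.inl_aut, map_inv, inv_mul_cancel_right]

variable {A : Type*}

theorem map_tS_eq_map_swap [Monoid A] (R : WP Γ N →* A) {i j : Fin N} {γ : Γ}
    (h : R (tG i γ) = R (tG j γ)) : R (tS i j γ) = R (SemidirectProduct.inr (swap i j)) := by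
  rw [tS, mul_assoc, map_mul, map_mul R (tG i γ), h, ← map_mul R (tG j γ), mul_inv_cancel,
    map_one, mul_one]

theorem map_tG_eq_map_tG [Ring A] (hΓ : IsUnit (Nat.card Γ : A)) (R : WP Γ N →* A) {γ : Γ}
    {i : Fin N}
    (hsum : Commute (R (tG i γ)) (transpositionSum (R.comp SemidirectProduct.inr))) (j : Fin N) :
    R (tG i γ) = R (tG j γ) := by
  refine eq_of_commute_transpositionSum (a := fun i ↦ R (tG i γ))
    (fun i j ↦ (commute_tG i j γ).map R) (fun σ i ↦ (semiconjBy_inr_tG σ i γ).map R) hsum hΓ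
    fun i ↦ ?_
  rw [← map_pow, ← tGHom_apply, ← map_pow, pow_card_eq_one', map_one, map_one]

end WreathProduct

section SymplecticReflectionAlgebra

variable {Γ : Subgroup SL2}

theorem actL_tG_single {N : ℕ} (i : Fin N) (γ : Γ) (u : Fin 2 → ℂ) :
    actL Γ N (tG i γ) (Pi.single i u) =
      Pi.single i (((γ : SL2) : Matrix (Fin 2) (Fin 2) ℂ).mulVec u) := by
  funext l
  obtain rfl | hl := eq_or_ne l i
  · simp [actL, tG]
  · simp [actL, tG, Pi.single_eq_of_ne hl]

theorem isUnit_coe_sub_one [Finite Γ] {γ : Γ} (hγ : γ ≠ 1) :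
    IsUnit (((γ : SL2) : Matrix (Fin 2) (Fin 2) ℂ) - 1) := by
  refine isUnit_sub_one_of_pow_eq_one (m := Nat.card Γ) ?_ (γ : SL2).det_coe ?_ ?_
  · exact_mod_cast Nat.card_pos.ne'
  · have hpow : (γ : SL2) ^ Nat.card Γ = 1 := by exact_mod_cast pow_card_eq_one' (x := γ)
    simpa using congrArg (fun g : SL2 ↦ (g : Matrix (Fin 2) (Fin 2) ℂ)) hpow
  · exact fun h ↦ hγ (Subtype.ext (Subtype.ext h))

variable [Fintype Γ] [DecidableEq Γ] {N : ℕ} {k : ℂ} {c : Γ → ℂ}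

variable (Γ N k c) in
/-- The map `Γ_N → H_{1,k,c}(Γ_N)`, as a monoid homomorphism. -/
def hGHom : WP Γ N →* HN Γ N k c where
  toFun := hG Γ N k c
  map_one' := by rw [hG, RingQuot.mkAlgHom_rel ℂ HRel.grp_one, map_one]
  map_mul' g h := by
    rw [hG, ← RingQuot.mkAlgHom_rel ℂ (HRel.grp_mul g h), map_mul, hG, hG]

theorem hGHom_apply (g : WP Γ N) : hGHom Γ N k c g = hG Γ N k c g := rfl

variable (Γ N k c) in
/-- The inclusion of the `i`-th copy of `L` into `H_{1,k,c}(Γ_N)`, sending the standard basis of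
`L = ℂ²` to `x_i, y_i`. -/
def hL (i : Fin N) : (Fin 2 → ℂ) →ₗ[ℂ] HN Γ N k c :=
  Fintype.linearCombination ℂ (hX Γ N k c i)

theorem hL_single (i : Fin N) (p : Fin 2) : hL Γ N k c i (Pi.single p 1) = hX Γ N k c i p := by
  rw [hL, Fintype.linearCombination_apply_single, one_smul]

theorem mkAlgHom_nV_single (i : Fin N) (u : Fin 2 → ℂ) :
    RingQuot.mkAlgHom ℂ (HRel Γ N k c) (nV Γ N (Pi.single i u)) = hL Γ N k c i u := by
  rw [nV, Fintype.sum_eq_single i fun l hl ↦ by simp [Pi.single_eq_of_ne hl], Pi.single_eq_same,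
    map_sum, hL, Fintype.linearCombination_apply]
  simp only [map_smul, hX]

theorem semiconjBy_hG_tG_hL (i : Fin N) (γ : Γ) (u : Fin 2 → ℂ) :
    SemiconjBy (hG Γ N k c (tG i γ)) (hL Γ N k c i u)
      (hL Γ N k c i (((γ : SL2) : Matrix (Fin 2) (Fin 2) ℂ).mulVec u)) := by
  have hrel := RingQuot.mkAlgHom_rel ℂ
    (HRel.grp_conj (k := k) (c := c) (tG i γ) (Pi.single i u))
  rw [actL_tG_single, map_mul, map_mul, mkAlgHom_nV_single, mkAlgHom_nV_single, ← hG, ← hG] at hrel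
  rw [SemiconjBy, ← hrel, mul_assoc, ← hGHom_apply (tG i γ)⁻¹, ← hGHom_apply, ← map_mul,
    inv_mul_cancel, map_one, mul_one]

theorem lie_hX_hX (i : Fin N) :
    ⁅hX Γ N k c i 0, hX Γ N k c i 1⁆ =
      1 + (k / 2) • ∑ j with j ≠ i, ∑ γ : Γ, hG Γ N k c (tS i j γ) +
        ∑ γ with γ ≠ 1, c γ • hG Γ N k c (tG i γ) := by
  have hrel := RingQuot.mkAlgHom_rel ℂ (HRel.r1 (k := k) (c := c) i)
  simpa only [map_sub, map_mul, map_add, map_one, map_smul, map_sum, Ring.lie_def, hX, hG]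
    using hrel

theorem lie_hL_hL {i j : Fin N} (hij : i ≠ j) (u v : Fin 2 → ℂ) :
    ⁅hL Γ N k c i u, hL Γ N k c j v⁆ =
      (-(k / 2)) • ∑ γ : Γ,
        omL (((γ : SL2) : Matrix (Fin 2) (Fin 2) ℂ).mulVec u) v • hG Γ N k c (tS i j γ) := by
  have hrel := RingQuot.mkAlgHom_rel ℂ (HRel.r2 (k := k) (c := c) i j hij u v)
  simpa only [map_sub, map_mul, map_smul, map_sum, mkAlgHom_nV_single, Ring.lie_def, hG]
    using hrel

section TrivialGroup

attribute [local instance] LieRing.ofAssociativeRing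

variable [Subsingleton Γ]

theorem lie_hX_hX_of_subsingleton {i j : Fin N} (hij : i ≠ j) :
    ⁅hX Γ N k c i 0, hX Γ N k c j 1⁆ =
      -((k / 2) • ∑ γ : Γ, hG Γ N k c (tS i j γ)) := by
  have hω (γ : Γ) : omL (((γ : SL2) : Matrix (Fin 2) (Fin 2) ℂ).mulVec (Pi.single 0 1))
      (Pi.single 1 1) = 1 := by
    rw [Subsingleton.elim γ 1]
    simp [omL]
  simp only [← hL_single, lie_hL_hL hij, hω, one_smul]
  exact neg_smul (R := ℂ) (M := HN Γ N k c) (k / 2) _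

/-- The transposition terms of (R1) and (R2) cancel. -/
theorem lie_hX_sum_hX_of_subsingleton (i : Fin N) :
    ⁅hX Γ N k c i 0, ∑ j, hX Γ N k c j 1⁆ = 1 := by
  have hoff : ∑ j with j ≠ i, ⁅hX Γ N k c i 0, hX Γ N k c j 1⁆ =
      -((k / 2) • ∑ j with j ≠ i, ∑ γ : Γ, hG Γ N k c (tS i j γ)) := by
    rw [smul_sum, ← sum_neg_distrib]
    exact sum_congr rfl fun j hj ↦ lie_hX_hX_of_subsingleton (mem_filter.mp hj).2.symm
  have hc : ∑ γ with γ ≠ 1, c γ • hG Γ N k c (tG i γ) = 0 :=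
    sum_eq_zero fun γ hγ ↦ absurd (Subsingleton.elim γ 1) (mem_filter.mp hγ).2
  rw [lie_sum, ← add_sum_erase _ _ (mem_univ i), ← filter_ne', hoff, lie_hX_hX, hc]
  abel

end TrivialGroup

section AlgHom

variable {A : Type*} [Ring A] [Algebra ℂ A] (φ : HN Γ N k c →ₐ[ℂ] A)

theorem map_hL_eq_zero {γ : Γ} (hγ : γ ≠ 1) {i : Fin N}
    (hcomm : ∀ v, Commute (φ (hG Γ N k c (tG i γ))) (φ (hL Γ N k c i v))) (u : Fin 2 → ℂ) :
    φ (hL Γ N k c i u) = 0 := by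
  set M : Matrix (Fin 2) (Fin 2) ℂ := ((γ : SL2) : Matrix (Fin 2) (Fin 2) ℂ)
  have hunit : IsUnit (φ (hG Γ N k c (tG i γ))) :=
    ((Group.isUnit (tG i γ)).map (hGHom Γ N k c)).map φ
  have hinv (v : Fin 2 → ℂ) : φ (hL Γ N k c i (M.mulVec v)) = φ (hL Γ N k c i v) := by
    have hconj := (semiconjBy_hG_tG_hL (k := k) (c := c) i γ v).map φ
    rw [SemiconjBy, (hcomm v).eq] at hconj
    exact (hunit.mul_right_cancel hconj).symm
  obtain ⟨v, rfl⟩ := Matrix.mulVec_surjective_iff_isUnit.mpr (isUnit_coe_sub_one hγ) u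
  rw [Matrix.sub_mulVec, Matrix.one_mulVec, map_sub, map_sub, hinv, sub_self]

end AlgHom

section Representation

variable {W : Type*} [AddCommGroup W] [Module ℂ W]

theorem nontrivial_of_algHom_end [FiniteDimensional ℂ W] [Nontrivial W] [NeZero N]
    (ρ : HN Γ N k c →ₐ[ℂ] Module.End ℂ W) : Nontrivial Γ := by
  by_contra hΓ
  rw [not_nontrivial_iff_subsingleton] at hΓ
  have hlie : ⁅ρ (hX Γ N k c 0 0), ρ (∑ j, hX Γ N k c j 1)⁆ = 1 := by
    rw [Ring.lie_def, ← map_mul, ← map_mul, ← map_sub, ← Ring.lie_def,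
      lie_hX_sum_hX_of_subsingleton, map_one]
  exact not_subsingleton W (subsingleton_of_lie_eq_one hlie)

variable (ρ : HN Γ N k c →ₐ[ℂ] Module.End ℂ W)

/-- The restriction of a representation of `H_{1,k,c}(Γ_N)` to `Γ_N`. -/
def wreathRep : Representation ℂ (WP Γ N) W :=
  (ρ : HN Γ N k c →* Module.End ℂ W).comp (hGHom Γ N k c)

/-- The restriction of a representation of `H_{1,k,c}(Γ_N)` to `S_N ⊂ Γ_N`. -/
def permRep : Representation ℂ (Perm (Fin N)) W :=
  (wreathRep ρ).comp SemidirectProduct.inr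

theorem wreathRep_apply (g : WP Γ N) : wreathRep ρ g = ρ (hG Γ N k c g) := rfl

theorem sum_permRep_swap_eq {i : Fin N} (hk : k ≠ 0) (hX0 : ρ (hX Γ N k c i 0) = 0) {χ : Γ → ℂ}
    (hχ : ∀ γ j, wreathRep ρ (tG j γ) = χ γ • LinearMap.id) :
    ∑ j with j ≠ i, permRep ρ (swap i j) =
      (-(2 / (k * (Fintype.card Γ : ℂ))) * (1 + ∑ γ with γ ≠ 1, c γ * χ γ)) • LinearMap.id := by
  have htS (j : Fin N) (γ : Γ) : wreathRep ρ (tS i j γ) = permRep ρ (swap i j) :=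
    map_tS_eq_map_swap _ ((hχ γ i).trans (hχ γ j).symm)
  have hR1 := congrArg ρ (lie_hX_hX (k := k) (c := c) i)
  simp only [Ring.lie_def, map_sub, map_mul, map_add, map_one, map_smul, map_sum, hX0, zero_mul,
    mul_zero, sub_zero, ← wreathRep_apply, htS, hχ, sum_const, card_univ, ← smul_sum,
    ← Nat.cast_smul_eq_nsmul ℂ, smul_smul, ← sum_smul] at hR1
  have hcoeff : k / 2 * Fintype.card Γ ≠ 0 := by simp [hk]
  refine smul_right_injective _ hcoeff ?_
  have hscalar : k / 2 * Fintype.card Γ *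
      (-(2 / (k * Fintype.card Γ)) * (1 + ∑ γ with γ ≠ 1, c γ * χ γ)) =
        -(1 + ∑ γ with γ ≠ 1, c γ * χ γ) := by
    have : (Fintype.card Γ : ℂ) ≠ 0 := by simp
    field_simp
  simp only [smul_smul, hscalar]
  change 0 = LinearMap.id + _ + _ at hR1
  rw [neg_smul, add_smul, one_smul, eq_neg_iff_add_eq_zero, hR1]
  abel

variable [FiniteDimensional ℂ W] [(permRep ρ).IsIrreducible]

theorem wreathRep_tG_eq (γ : Γ) (i j : Fin N) : wreathRep ρ (tG i γ) = wreathRep ρ (tG j γ) := by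
  have hcard : IsUnit (Nat.card Γ : Module.End ℂ W) := by
    have hne : (Nat.card Γ : ℂ) ≠ 0 := by exact_mod_cast Nat.card_pos.ne'
    simpa using (IsUnit.mk0 _ hne).map (algebraMap ℂ (Module.End ℂ W))
  obtain ⟨μ, hμ⟩ := mem_range_algebraMap_of_forall_commute (permRep ρ)
    (commute_transpositionSum (permRep ρ))
  refine map_tG_eq_map_tG hcard (wreathRep ρ) ?_ j
  change Commute _ (transpositionSum (permRep ρ))
  exact hμ ▸ Algebra.commute_algebraMap_right μ _

theorem exists_character [NeZero N] :
    ∃ χ : Γ →* ℂˣ, ∀ γ (i : Fin N), wreathRep ρ (tG i γ) = (χ γ : ℂ) • LinearMap.id := by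
  have hscalar (γ : Γ) : wreathRep ρ (tG 0 γ) ∈ Set.range (algebraMap ℂ (Module.End ℂ W)) := by
    refine mem_range_algebraMap_of_forall_commute (permRep ρ) fun σ ↦ ?_
    have hconj := (semiconjBy_inr_tG σ 0 γ).map (wreathRep ρ)
    rw [wreathRep_tG_eq ρ γ (σ 0) 0] at hconj
    exact hconj.symm
  have := nontrivial_of_isIrreducible (permRep ρ)
  obtain ⟨χ, hχ⟩ := exists_character_of_forall_mem_range_algebraMap
    ((wreathRep ρ).comp (tGHom 0)) hscalar
  exact ⟨χ, fun γ i ↦ (wreathRep_tG_eq ρ γ i 0).trans (hχ γ)⟩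

theorem map_hX_eq_zero [NeZero N] (i : Fin N) (p : Fin 2) : ρ (hX Γ N k c i p) = 0 := by
  have := nontrivial_of_isIrreducible (permRep ρ)
  have := nontrivial_of_algHom_end ρ
  obtain ⟨γ, hγ⟩ := exists_ne (1 : Γ)
  obtain ⟨χ, hχ⟩ := exists_character ρ
  rw [← hL_single]
  refine map_hL_eq_zero ρ hγ (fun v ↦ ?_) _
  rw [← wreathRep_apply, hχ]
  exact Algebra.commute_algebraMap_left (χ γ : ℂ) _

theorem stmt_5_general [NeZero N] (hk : k ≠ 0) :
    ∃ χ : Γ →* ℂˣ,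
      (∀ (γ : Γ) (i : Fin N), ρ (hG Γ N k c (tG i γ)) = (χ γ : ℂ) • LinearMap.id) ∧
      (∀ (i : Fin N) (p : Fin 2), ρ (hX Γ N k c i p) = 0) ∧
      ∀ i : Fin N, ∑ j with j ≠ i, permRep ρ (swap i j) =
        (-(2 / (k * (Fintype.card Γ : ℂ))) * (1 + ∑ γ with γ ≠ 1, c γ * (χ γ : ℂ))) •
          LinearMap.id := by
  obtain ⟨χ, hχ⟩ := exists_character ρ
  have hX_zero := map_hX_eq_zero ρ
  exact ⟨χ, hχ, hX_zero, fun i ↦ sum_permRep_swap_eq ρ hk (hX_zero i 0) hχ⟩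

end Representation

end SymplecticReflectionAlgebra
/-- let `(W, ρ_W)` be an irreducible complex representation of `S_N` and
`k ≠ 0`.  If `ρ_W` extends to a representation `ρ` of `H_{1,k,c}(Γ_N)` on `W`, then
there is a character `χ : Γ → ℂˣ` such that `ρ(γ_i) = χ(γ)·Id` for all `γ, i`,
`ρ(x_i) = ρ(y_i) = 0` for all `i`, and
`ρ_W(s_{12} + ⋯ + s_{1N}) = -(2/(k|Γ|))(1 + ∑_{γ≠1} c_γ χ(γ)) · Id`; in particular the
sum of transpositions `s_{12} + ⋯ + s_{1N}` acts on `W` by a scalar. -/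
theorem stmt_5 (Γ : Subgroup SL2) [Fintype Γ] [DecidableEq Γ] (N : ℕ) (hN : 0 < N)
    (k : ℂ) (hk : k ≠ 0) (c : Γ → ℂ) (hc : ∀ γ δ : Γ, c (δ * γ * δ⁻¹) = c γ)
    (W : Type) [AddCommGroup W] [Module ℂ W] [FiniteDimensional ℂ W] [Nontrivial W]
    (ρW : Representation ℂ (Equiv.Perm (Fin N)) W)
    (hirr : ∀ U : Submodule ℂ W,
      (∀ σ : Equiv.Perm (Fin N), U.map (ρW σ) ≤ U) → U = ⊥ ∨ U = ⊤)
    (ρ : HN Γ N k c →ₐ[ℂ] Module.End ℂ W)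
    (hres : ∀ σ : Equiv.Perm (Fin N), ρ (hG Γ N k c (SemidirectProduct.inr σ)) = ρW σ) :
    ∃ χ : Γ →* ℂˣ,
      (∀ (γ : Γ) (i : Fin N), ρ (hG Γ N k c (tG i γ)) = (χ γ : ℂ) • LinearMap.id) ∧
      (∀ (i : Fin N) (p : Fin 2), ρ (hX Γ N k c i p) = 0) ∧
      (∑ j ∈ Finset.univ.filter (fun j : Fin N => j ≠ (⟨0, hN⟩ : Fin N)),
          ρW (Equiv.swap ⟨0, hN⟩ j) =
        (-(2 / (k * (Fintype.card Γ : ℂ))) *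
          (1 + ∑ γ ∈ Finset.univ.filter (fun γ : Γ => γ ≠ 1), c γ * (χ γ : ℂ))) •
          LinearMap.id) := by
  obtain rfl : permRep ρ = ρW := MonoidHom.ext hres
  have := isIrreducible_of_forall_map_le (permRep ρ) hirr
  have : NeZero N := ⟨hN.ne'⟩
  obtain ⟨χ, hχ, hX_zero, hsum⟩ := stmt_5_general ρ hk
  exact ⟨χ, hχ, hX_zero, hsum ⟨0, hN⟩⟩
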